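/- Let G be a locally graded group and N a normal locally nilpotent subgroup of G. Then the quotient G/N is locally graded. -/

import Mathlib

/-- A group is locally graded if every nontrivial finitely generated subgroup has a
proper subgroup of finite index. -/
def LocallyGraded (G : Type*) [Group G] : Prop :=
  ∀ H : Subgroup G, H ≠ ⊥ → Group.FG H → ∃ K : Subgroup H, K ≠ ⊤ ∧ K.FiniteIndex

/-- A group is locally nilpotent if every finitely generated subgroup is nilpotent. -/
def LocallyNilpotent (G : Type*) [Group G] : Prop :=
  ∀ H : Subgroup G, Group.FG H → Group.IsNilpotent H

universe u
section aux
open scoped commutatorElement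
variable {G Q : Type*} [Group G] [Group Q]

lemma aux_lift_fg (φ : G →* Q) (H : Subgroup G) (h : (H.map φ).FG) :
    ∃ F : Subgroup G, F ≤ H ∧ F.FG ∧ F.map φ = H.map φ := by
  classical
  obtain ⟨S, hS⟩ := h
  have hsub : (S : Set Q) ⊆ φ '' (H : Set G) := by
    intro x hx
    have : x ∈ H.map φ := hS ▸ Subgroup.subset_closure hx
    exact this
  obtain ⟨T, hT, rfl⟩ := Finset.subset_set_image_iff.1 hsub
  refine ⟨Subgroup.closure T, (Subgroup.closure_le _).2 hT, ⟨T, rfl⟩, ?_⟩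
  rw [← hS, MonoidHom.map_closure, Finset.coe_image]

lemma aux_fg_map (φ : G →* Q) (H : Subgroup G) (h : H.FG) : (H.map φ).FG := by
  classical
  obtain ⟨S, rfl⟩ := h
  exact ⟨S.image φ, by rw [MonoidHom.map_closure, Finset.coe_image]⟩

lemma aux_fg_ext (φ : G →* Q) (H : Subgroup G) (h : (H.map φ).FG) (h2 : (H ⊓ φ.ker).FG) :
    H.FG := by
  obtain ⟨F, hF, hfg, hm⟩ := aux_lift_fg φ H h
  have : H = F ⊔ (H ⊓ φ.ker) := by
    apply le_antisymm
    · intro x hx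
      have : φ x ∈ F.map φ := hm ▸ Subgroup.mem_map_of_mem φ hx
      obtain ⟨y, hy, hxy⟩ := this
      have h3 : y⁻¹ * x ∈ H ⊓ φ.ker := by
        refine ⟨H.mul_mem (H.inv_mem (hF hy)) hx, ?_⟩
        simp [hxy]
      have h4 := (F ⊔ (H ⊓ φ.ker)).mul_mem (Subgroup.mem_sup_left hy) (Subgroup.mem_sup_right h3)
      simpa using h4
    · exact sup_le hF inf_le_left
  rw [this]
  exact hfg.sup h2

lemma aux_map_top_iff (A K : Subgroup G) [K.Normal] :
    A.map (QuotientGroup.mk' K) = ⊤ ↔ A ⊔ K = ⊤ := by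
  have h := Subgroup.comap_map_eq (QuotientGroup.mk' K) A
  rw [QuotientGroup.ker_mk'] at h
  rw [← h]
  constructor
  · intro h; rw [h]; simp
  · intro h
    rw [← Subgroup.map_comap_eq_self_of_surjective (QuotientGroup.mk'_surjective K)
      (A.map (QuotientGroup.mk' K)), h]
    exact Subgroup.map_top_of_surjective _ (QuotientGroup.mk'_surjective K)

lemma aux_frattini (Q : Type*) [Group Q] [hn : Group.IsNilpotent Q] :
    ∀ H : Subgroup Q, H ⊔ commutator Q = ⊤ → H = ⊤ := by
  refine @Group.nilpotent_center_quotient_ind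
    (fun Q _ _ => ∀ H : Subgroup Q, H ⊔ commutator Q = ⊤ → H = ⊤) Q _ _ ?_ ?_
  · intro G _ _ H _
    exact @Subsingleton.elim _ Unique.instSubsingleton _ _
  · intro G _ _ ih H hH
    have h1 : H.map (QuotientGroup.mk' (Subgroup.center G)) = ⊤ := by
      apply ih
      have := congrArg (Subgroup.map (QuotientGroup.mk' (Subgroup.center G))) hH
      rw [Subgroup.map_sup, Subgroup.map_top_of_surjective _ (QuotientGroup.mk'_surjective _)] at this
      rw [eq_top_iff, ← this]
      apply sup_le_sup le_rfl
      rw [commutator_def, Subgroup.map_commutator, commutator_def]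
      exact Subgroup.commutator_mono le_top le_top
    rw [aux_map_top_iff] at h1
    have key : ∀ g : G, ∃ h ∈ H, ∃ z ∈ Subgroup.center G, h * z = g := by
      intro g
      have : g ∈ H ⊔ Subgroup.center G := h1 ▸ Subgroup.mem_top g
      exact Subgroup.mem_sup_of_normal_right.1 this
    have h2 : commutator G ≤ H := by
      rw [commutator_def, Subgroup.commutator_le]
      intro a _ b _
      obtain ⟨h, hh, z, hz, rfl⟩ := key a
      obtain ⟨k, hk, w, hw, rfl⟩ := key b
      have hz' := Subgroup.mem_center_iff.1 hz
      have hw' := Subgroup.mem_center_iff.1 hw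
      have : ⁅h * z, k * w⁆ = ⁅h, k⁆ := by
        have e1 : ⁅h * z, k * w⁆ = ⁅h, k * w⁆ := by
          simp only [commutatorElement_def, mul_inv_rev]
          calc h * z * (k * w) * (z⁻¹ * h⁻¹) * (w⁻¹ * k⁻¹)
              = h * (z * (k * w)) * z⁻¹ * h⁻¹ * (w⁻¹ * k⁻¹) := by group
            _ = h * (k * w) * h⁻¹ * (w⁻¹ * k⁻¹) := by rw [← hz' (k * w)]; group
        rw [e1]
        simp only [commutatorElement_def, mul_inv_rev]
        calc h * (k * w) * h⁻¹ * (w⁻¹ * k⁻¹) = h * k * (w * h⁻¹) * w⁻¹ * k⁻¹ := by group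
          _ = h * k * h⁻¹ * k⁻¹ := by rw [← hw' h⁻¹]; group
      rw [this, commutatorElement_def]
      exact H.mul_mem (H.mul_mem (H.mul_mem hh hk) (H.inv_mem hh)) (H.inv_mem hk)
    rwa [sup_eq_left.2 h2] at hH

/-- Subgroups of finitely generated abelian subgroups are finitely generated. -/
lemma aux_comm_fg (A : Type*) [CommGroup A] [Group.FG A] (H : Subgroup A) : H.FG := by
  have : AddGroup.FG (Additive A) := inferInstance
  have : Module.Finite ℤ (Additive A) := Module.Finite.iff_addGroup_fg.2 inferInstance
  have : IsNoetherian ℤ (Additive A) := inferInstance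
  have h := IsNoetherian.noetherian (AddSubgroup.toIntSubmodule (Subgroup.toAddSubgroup H))
  rw [Subgroup.fg_iff_add_fg]
  rw [Submodule.fg_iff_addSubgroup_fg] at h
  simpa using h

lemma aux_central_fg (Γ H : Subgroup G) (hΓ : Γ ≤ Subgroup.center G) (hfg : Γ.FG) (hH : H ≤ Γ) :
    H.FG := by
  let : CommGroup Γ := { (inferInstance : Group Γ) with
    mul_comm := fun a b => Subtype.ext ((Subgroup.mem_center_iff.1 (hΓ b.2)) a.1) }
  have : Group.FG Γ := (Group.fg_iff_subgroup_fg Γ).2 hfg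
  have h := aux_fg_map Γ.subtype _ (aux_comm_fg Γ (H.subgroupOf Γ))
  rwa [Subgroup.map_subgroupOf_eq_of_le hH] at h

lemma aux_noeth (n : ℕ) : ∀ (Q : Type u) [Group Q] [Group.FG Q],
    (⊤ : Subgroup Q).lowerCentralSeries n = ⊥ → ∀ H : Subgroup Q, H.FG := by
  induction n with
  | zero =>
    intro Q _ _ h H
    rw [Subgroup.lowerCentralSeries_zero] at h
    have : H = ⊥ := le_bot_iff.1 (h ▸ le_top)
    rw [this]; exact Subgroup.FG.bot
  | succ n ih =>
    intro Q _ _ h H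
    set Γ := (⊤ : Subgroup Q).lowerCentralSeries n with hΓ
    have hcen : Γ ≤ Subgroup.center Q := by
      rw [Subgroup.lowerCentralSeries_succ] at h
      exact Subgroup.commutator_top_right_eq_bot_iff_le_center.1 h
    have hq : ∀ K : Subgroup (Q ⧸ Γ), K.FG := by
      apply ih
      rw [← Subgroup.map_top_of_surjective _ (QuotientGroup.mk'_surjective Γ),
        ← Subgroup.map_lowerCentralSeries, ← hΓ]
      simp
    have hfg : Γ.FG := by
      classical
      cases n with
      | zero =>
        rw [hΓ, Subgroup.lowerCentralSeries_zero]
        exact Group.FG.out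
      | succ m =>
        set B := (⊤ : Subgroup Q).lowerCentralSeries m with hB
        have hΓB : Γ = ⁅B, ⊤⁆ := by rw [hΓ, Subgroup.lowerCentralSeries_succ]
        obtain ⟨F, hFB, ⟨A, rfl⟩, hF⟩ := aux_lift_fg (QuotientGroup.mk' Γ) B (hq _)
        obtain ⟨X, hX⟩ := (Group.FG.out : (⊤ : Subgroup Q).FG)
        have hAB : ∀ a ∈ A, a ∈ B := fun a ha => hFB (Subgroup.subset_closure ha)
        set S : Finset Q := (A ×ˢ X).image (fun p => ⁅p.1, p.2⁆) with hS
        set D := Subgroup.closure (S : Set Q) with hD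
        have hSD : ∀ a ∈ A, ∀ x ∈ X, ⁅a, x⁆ ∈ D := by
          intro a ha x hx
          apply Subgroup.subset_closure
          simp only [hS, Finset.coe_image, Finset.coe_product]
          exact ⟨(a, x), ⟨ha, hx⟩, rfl⟩
        have hDΓ : D ≤ Γ := by
          rw [hD, Subgroup.closure_le]
          intro y hy
          simp only [hS, Finset.coe_image, Finset.coe_product] at hy
          obtain ⟨⟨a, x⟩, ⟨ha, hx⟩, rfl⟩ := hy
          rw [hΓB]
          exact Subgroup.commutator_mem_commutator (hAB a ha) trivial
        have hDn : D.Normal := by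
          constructor
          intro d hd g
          have := Subgroup.mem_center_iff.1 (hcen (hDΓ hd)) g
          rw [this]; simpa using hd
        have hle : B ≤ (Subgroup.center (Q ⧸ D)).comap (QuotientGroup.mk' D) := by
          have hA : Subgroup.closure (A : Set Q) ≤
              (Subgroup.center (Q ⧸ D)).comap (QuotientGroup.mk' D) := by
            rw [Subgroup.closure_le]
            intro a ha
            have h1 : (⊤ : Subgroup Q) ≤
                (Subgroup.centralizer {QuotientGroup.mk' D a}).comap (QuotientGroup.mk' D) := by
              rw [← hX, Subgroup.closure_le]
              intro x hx
              have := (QuotientGroup.eq_one_iff _).2 (hSD a ha x hx)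
              change QuotientGroup.mk' D _ = 1 at this
              rw [map_commutatorElement, commutatorElement_eq_one_iff_mul_comm] at this
              simp only [Subgroup.coe_comap, Set.mem_preimage, SetLike.mem_coe,
                Subgroup.mem_centralizer_iff, Set.mem_singleton_iff, forall_eq]
              exact this
            simp only [Subgroup.coe_comap, Set.mem_preimage, SetLike.mem_coe,
              Subgroup.mem_center_iff]
            intro g
            obtain ⟨x, rfl⟩ := QuotientGroup.mk'_surjective D g
            have := h1 (Subgroup.mem_top x)
            simp only [Subgroup.mem_comap,
                Subgroup.mem_centralizer_iff, Set.mem_singleton_iff, forall_eq] at this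
            exact this.symm
          have hΓ2 : Γ ≤ (Subgroup.center (Q ⧸ D)).comap (QuotientGroup.mk' D) := by
            intro z hz
            rw [Subgroup.mem_comap, Subgroup.mem_center_iff]
            intro g
            obtain ⟨x, rfl⟩ := QuotientGroup.mk'_surjective D g
            rw [← map_mul, ← map_mul, Subgroup.mem_center_iff.1 (hcen hz) x]
          intro b hb
          have : QuotientGroup.mk' Γ b ∈ (Subgroup.closure (A : Set Q)).map (QuotientGroup.mk' Γ) :=
            hF ▸ Subgroup.mem_map_of_mem _ hb
          obtain ⟨y, hy, hyb⟩ := this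
          have h3 : y⁻¹ * b ∈ Γ := QuotientGroup.eq.1 hyb
          have := Subgroup.mul_mem _ (hA hy) (hΓ2 h3)
          simpa using this
        have : Γ = D := by
          apply le_antisymm _ hDΓ
          rw [hΓB, Subgroup.commutator_le]
          intro b hb g _
          have h1 := hle hb
          rw [Subgroup.mem_comap, Subgroup.mem_center_iff] at h1
          rw [← QuotientGroup.eq_one_iff]
          change QuotientGroup.mk' D _ = 1
          rw [map_commutatorElement, commutatorElement_eq_one_iff_mul_comm]
          exact (h1 _).symm
        rw [this]
        exact ⟨S, rfl⟩
    apply aux_fg_ext (QuotientGroup.mk' Γ) H (hq _)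
    rw [QuotientGroup.ker_mk']
    exact aux_central_fg Γ _ hcen hfg inf_le_right

lemma aux_noeth' (E H : Subgroup G) [Group.IsNilpotent E] (hE : E.FG) (hH : H ≤ E) : H.FG := by
  have : Group.FG E := (Group.fg_iff_subgroup_fg E).2 hE
  obtain ⟨n, hn⟩ := Subgroup.nilpotent_iff_lowerCentralSeries.1 (inferInstance : Group.IsNilpotent E)
  have h := aux_fg_map E.subtype _ (aux_noeth n E hn (H.subgroupOf E))
  rwa [Subgroup.map_subgroupOf_eq_of_le hH] at h

lemma aux_char (R : Type*) [Group R] [Group.FG R] (K : Subgroup R) (hK : K ≠ ⊤)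
    [K.FiniteIndex] : ∃ L : Subgroup R, L ≠ ⊤ ∧ L.FiniteIndex ∧
      ∀ (e : R ≃* R), ∀ x ∈ L, e x ∈ L := by
  classical
  obtain ⟨S, hS⟩ := (Group.FG.out : (⊤ : Subgroup R).FG)
  have : Finite (R ⧸ K) := inferInstance
  let P := Equiv.Perm (R ⧸ K)
  have : Finite P := inferInstance
  have : Finite (R →* P) := by
    apply Finite.of_injective (fun (f : R →* P) (s : S) => f s)
    intro f g hfg
    apply MonoidHom.eq_of_eqOn_dense hS
    intro x hx
    exact congrFun hfg ⟨x, hx⟩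
  refine ⟨⨅ f : R →* P, f.ker, ?_, ?_, ?_⟩
  · intro h
    apply hK
    rw [eq_top_iff, ← h]
    refine (iInf_le _ (MulAction.toPermHom R (R ⧸ K))).trans ?_
    rw [← Subgroup.normalCore_eq_ker]
    exact Subgroup.normalCore_le K
  · apply Subgroup.finiteIndex_iInf
    intro f
    infer_instance
  · intro e x hx
    rw [Subgroup.mem_iInf] at hx ⊢
    intro f
    exact hx (f.comp e.toMonoidHom)

lemma aux_abelian (A : Type*) [CommGroup A] [Group.FG A]
    (h : ∀ K : Subgroup A, K.FiniteIndex → K = ⊤) : Subsingleton A := by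
  have hdiv : ∀ n : ℕ, n ≠ 0 → ∀ a : A, ∃ b : A, b ^ n = a := by
    intro n hn a
    have := h _ (Subgroup.finiteIndex_range_powMonoidHom_of_fg A hn)
    have ha : a ∈ (powMonoidHom n : A →* A).range := this ▸ Subgroup.mem_top a
    exact ha
  have : Module.Finite ℤ (Additive A) := Module.Finite.iff_addGroup_fg.2 inferInstance
  obtain ⟨r, hr, hr2⟩ := Submodule.exists_sub_one_mem_and_smul_eq_zero_of_fg_of_le_smul
    (Ideal.span {(2 : ℤ)}) (⊤ : Submodule ℤ (Additive A)) Module.Finite.fg_top (by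
      intro a _
      obtain ⟨b, hb⟩ := hdiv 2 (by norm_num) a.toMul
      have : a = (2 : ℤ) • Additive.ofMul b := by
        rw [← ofMul_zpow]; apply Additive.toMul.injective; simp [← hb]
      rw [this]
      exact Submodule.smul_mem_smul (Ideal.mem_span_singleton_self _) trivial)
  have hr0 : r.natAbs ≠ 0 := by
    rw [Ideal.mem_span_singleton] at hr
    omega
  refine ⟨fun a b => ?_⟩
  have : ∀ a : A, a = 1 := by
    intro a
    obtain ⟨b, rfl⟩ := hdiv _ hr0 a
    have : b ^ r = 1 := hr2 (Additive.ofMul b) trivial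
    exact pow_natAbs_eq_one.2 this
  rw [this a, this b]

theorem aux_core (G : Type*) [Group G] [Group.FG G] (hlg : LocallyGraded G)
    (Q : Type*) [Group Q] [Nontrivial Q] (φ : G →* Q) (hφ : Function.Surjective φ)
    (hnil : ∀ E : Subgroup G, E ≤ φ.ker → E.FG → Group.IsNilpotent E) :
    ∃ K : Subgroup Q, K ≠ ⊤ ∧ K.FiniteIndex := by
  classical
  by_contra hcon
  have hQ : ∀ K : Subgroup Q, K.FiniteIndex → K = ⊤ := by
    intro K hK
    by_contra h
    exact hcon ⟨K, h, hK⟩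
  have hGtop : (⊤ : Subgroup G).FG := Group.FG.out
  have hperf : commutator Q = ⊤ := by
    have : Group.FG Q := Group.fg_of_surjective hφ
    have : Group.FG (Abelianization Q) := inferInstanceAs (Group.FG (Q ⧸ commutator Q))
    have hs : Subsingleton (Abelianization Q) := by
      apply aux_abelian
      intro K hK
      have h1 : K.comap Abelianization.of = ⊤ := hQ _ ⟨by
        rw [Subgroup.index_comap_of_surjective K QuotientGroup.mk_surjective]
        exact hK.index_ne_zero⟩
      have h2 : Function.Surjective (Abelianization.of (G := Q)) := QuotientGroup.mk_surjective
      rw [← Subgroup.map_comap_eq_self_of_surjective h2 K, h1]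
      exact Subgroup.map_top_of_surjective _ h2
    rw [eq_top_iff]
    intro x _
    rw [← Abelianization.ker_of, MonoidHom.mem_ker]
    exact Subsingleton.elim _ _
  have hN : φ.ker ⊔ commutator G = ⊤ := by
    have h1 : (commutator G).map φ = ⊤ := by
      rw [commutator_def, Subgroup.map_commutator, Subgroup.map_top_of_surjective φ hφ,
        ← commutator_def, hperf]
    have h2 := Subgroup.comap_map_eq φ (commutator G)
    rw [h1, Subgroup.comap_top] at h2
    rw [sup_comm]; exact h2.symm
  have hlift : ∀ (K : Subgroup G) [K.Normal], φ.ker ⊔ K = ⊤ →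
      ∃ F ≤ φ.ker, F.FG ∧ F ⊔ K = ⊤ := by
    intro K _ hK
    rw [← aux_map_top_iff] at hK
    obtain ⟨F, h1, h2, h3⟩ := aux_lift_fg (QuotientGroup.mk' K) φ.ker (by
      rw [hK]; exact Group.FG.out)
    exact ⟨F, h1, h2, (aux_map_top_iff F K).1 (h3.trans hK)⟩
  obtain ⟨F, hFN, hFfg, hF⟩ := hlift _ hN
  have hFnil := hnil F hFN hFfg
  obtain ⟨c, hc⟩ : ∃ c, F.lowerCentralSeries c = ⊥ := 
    (Subgroup.isNilpotent_iff_lowerCentralSeries F).1 hFnil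
  have hcover : ∀ (K : Subgroup G) [K.Normal], Group.IsNilpotent (G ⧸ K) → F ⊔ K = ⊤ := by
    intro K _ hK
    rw [← aux_map_top_iff]
    apply aux_frattini
    have h1 := congrArg (Subgroup.map (QuotientGroup.mk' K)) hF
    rw [Subgroup.map_sup, commutator_def, Subgroup.map_commutator,
      Subgroup.map_top_of_surjective _ (QuotientGroup.mk'_surjective K), ← commutator_def] at h1
    exact h1
  set R := (⊤ : Subgroup G).lowerCentralSeries c with hR
  have hRmap : ∀ (K : Subgroup G) [K.Normal], R.map (QuotientGroup.mk' K) =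
      (⊤ : Subgroup (G ⧸ K)).lowerCentralSeries c := by
    intro K _
    rw [hR, Subgroup.map_lowerCentralSeries,
      Subgroup.map_top_of_surjective _ (QuotientGroup.mk'_surjective K)]
  have hRle : ∀ (K : Subgroup G) [K.Normal], φ.ker ⊔ K = ⊤ → R ≤ K := by
    intro K _ hK
    obtain ⟨E, hEN, hEfg, hE⟩ := hlift K hK
    have hEnil := hnil E hEN hEfg
    have hnilK : Group.IsNilpotent (G ⧸ K) := by
      refine Group.nilpotent_of_surjective ((QuotientGroup.mk' K).comp E.subtype) ?_
      rw [← MonoidHom.range_eq_top, MonoidHom.range_comp, Subgroup.range_subtype]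
      exact (aux_map_top_iff E K).2 hE
    have h1 := (aux_map_top_iff F K).2 (hcover K hnilK)
    have h2 := hRmap K
    rw [← h1, ← Subgroup.map_lowerCentralSeries, hc, Subgroup.map_bot,
      Subgroup.map_eq_bot_iff, QuotientGroup.ker_mk'] at h2
    exact h2
  have hFR : F ⊔ R = ⊤ := by
    apply hcover
    apply Subgroup.nilpotent_iff_lowerCentralSeries.2
    refine ⟨c, ?_⟩
    rw [← hRmap R, Subgroup.map_eq_bot_iff, QuotientGroup.ker_mk']
  have hRfg : R.FG := by
    obtain ⟨X, hX⟩ := hGtop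
    have hdec : ∀ g : G, ∃ f ∈ F, ∃ r ∈ R, f * r = g := by
      intro g
      have : g ∈ F ⊔ R := hFR ▸ Subgroup.mem_top g
      exact Subgroup.mem_sup_of_normal_right.1 this
    choose f hf r hr hfr using hdec
    set Y : Finset G := X.image r with hY
    obtain ⟨T, hT⟩ := hFfg
    have hTF : ∀ t ∈ T, t ∈ F := fun t ht => hT ▸ Subgroup.subset_closure ht
    set S : Finset G := (T ×ˢ Y).image (fun p => ⁅p.1, p.2⁆) with hS
    set E := F ⊔ Subgroup.closure (S : Set G) with hE
    have hYR : ∀ y ∈ Y, y ∈ R := by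
      intro y hy
      obtain ⟨x, _, rfl⟩ := Finset.mem_image.1 hy
      exact hr x
    have hSE : ∀ t ∈ T, ∀ y ∈ Y, ⁅t, y⁆ ∈ E := by
      intro t ht y hy
      apply Subgroup.mem_sup_right
      apply Subgroup.subset_closure
      exact Finset.mem_coe.2 (Finset.mem_image.2 ⟨(t, y), Finset.mem_product.2 ⟨ht, hy⟩, rfl⟩)
    have hEN : E ≤ φ.ker := by
      refine sup_le hFN ((Subgroup.closure_le _).2 ?_)
      intro z hz
      obtain ⟨⟨t, y⟩, hp, rfl⟩ := Finset.mem_image.1 (Finset.mem_coe.1 hz)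
      have ht := hFN (hTF t (Finset.mem_product.1 hp).1)
      rw [MonoidHom.mem_ker] at ht
      simp [MonoidHom.mem_ker, map_commutatorElement, ht]
    have hEfg : E.FG := Subgroup.FG.sup ⟨T, hT⟩ ⟨S, rfl⟩
    have hEnil := hnil E hEN hEfg
    have hFE : F ≤ E := le_sup_left
    have hcomm : ∀ y ∈ Y, ∀ t ∈ F, ⁅t, y⁆ ∈ E := by
      intro y hy t ht
      rw [← hT] at ht
      have hTE : Subgroup.closure (T : Set G) ≤ E := by rw [hT]; exact hFE
      induction ht using Subgroup.closure_induction with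
      | mem x hx => exact hSE x hx y hy
      | one => simp
      | mul a b ha hb iha ihb =>
        rw [show ⁅a * b, y⁆ = a * ⁅b, y⁆ * a⁻¹ * ⁅a, y⁆ by
          simp only [commutatorElement_def]; group]
        exact E.mul_mem (E.mul_mem (E.mul_mem (hTE ha) ihb) (E.inv_mem (hTE ha))) iha
      | inv a ha iha =>
        rw [show ⁅a⁻¹, y⁆ = a⁻¹ * ⁅a, y⁆⁻¹ * a by
          simp only [commutatorElement_def]; group]
        exact E.mul_mem (E.mul_mem (E.inv_mem (hTE ha)) (E.inv_mem iha)) (hTE ha)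
    set D := Subgroup.closure (Y : Set G) ⊔ (E ⊓ R) with hD
    have hDR : D ≤ R := sup_le ((Subgroup.closure_le _).2 hYR) inf_le_right
    have hconj : ∀ t ∈ F, ∀ d ∈ D, t * d * t⁻¹ ∈ D := by
      intro t ht
      have : D ≤ D.comap (MulAut.conj t).toMonoidHom := by
        refine sup_le ((Subgroup.closure_le _).2 ?_) ?_
        · intro y hy
          have h1 : ⁅t, y⁆ ∈ D := by
            apply Subgroup.mem_sup_right
            refine ⟨hcomm y hy t ht, ?_⟩
            have h2 := R.mul_mem ((inferInstance : R.Normal).conj_mem y (hYR y hy) t)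
              (R.inv_mem (hYR y hy))
            exact h2
          have h3 := D.mul_mem h1 (Subgroup.mem_sup_left (Subgroup.subset_closure hy))
          have h4 : ⁅t, y⁆ * y = t * y * t⁻¹ := by simp [commutatorElement_def]
          rw [h4] at h3
          exact h3
        · intro z hz
          apply Subgroup.mem_sup_right
          exact ⟨E.mul_mem (E.mul_mem (hFE ht) hz.1) (E.inv_mem (hFE ht)),
            (inferInstance : R.Normal).conj_mem z hz.2 t⟩
      exact fun d hd => this hd
    have hFnorm : F ≤ Subgroup.normalizer (D : Set G) := by
      intro t ht
      rw [Subgroup.mem_normalizer_iff]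
      intro d
      refine ⟨hconj t ht d, fun h => ?_⟩
      have := hconj t⁻¹ (F.inv_mem ht) _ h
      simpa [mul_assoc] using this
    have hFD : F ⊔ D = ⊤ := by
      rw [eq_top_iff, ← hX, Subgroup.closure_le]
      intro x hx
      rw [← hfr x]
      refine Subgroup.mul_mem _ (Subgroup.mem_sup_left (hf x)) (Subgroup.mem_sup_right ?_)
      exact Subgroup.mem_sup_left (Subgroup.subset_closure (Finset.mem_coe.2
        (Finset.mem_image_of_mem r hx)))
    have hRD : R = D := by
      apply le_antisymm _ hDR
      intro x hx
      have hx2 : x ∈ ((F ⊔ D : Subgroup G) : Set G) := by rw [hFD]; trivial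
      rw [Subgroup.coe_mul_of_left_le_normalizer_right F D hFnorm] at hx2
      obtain ⟨t, ht, d, hd, rfl⟩ := hx2
      have htR : t ∈ R := by
        have := R.mul_mem hx (R.inv_mem (hDR hd))
        simpa using this
      exact D.mul_mem (Subgroup.mem_sup_right ⟨hFE ht, htR⟩) hd
    rw [hRD]
    exact Subgroup.FG.sup ⟨Y, rfl⟩ (aux_noeth' E _ hEfg inf_le_left)
  have hRne : R ≠ ⊥ := by
    intro h
    rw [h, sup_bot_eq] at hFR
    obtain ⟨q, hq⟩ := exists_ne (1 : Q)
    obtain ⟨g, rfl⟩ := hφ q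
    exact hq (hFN (hFR ▸ Subgroup.mem_top g))
  have hRgfg : Group.FG R := (Group.fg_iff_subgroup_fg R).2 hRfg
  obtain ⟨K, hK, hKfi⟩ := hlg R hRne hRgfg
  obtain ⟨L, hL, hLfi, hLchar⟩ := aux_char R K hK
  have hLn : (L.map R.subtype).Normal := by
    constructor
    rintro _ ⟨x, hx, rfl⟩ g
    exact ⟨MulAut.conjNormal g x, hLchar _ x hx, by simp⟩
  have hRQ : Function.Surjective (φ.comp R.subtype) := by
    rw [← MonoidHom.range_eq_top, MonoidHom.range_comp, Subgroup.range_subtype]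
    have h1 := congrArg (Subgroup.map φ) hFR
    rwa [Subgroup.map_sup, (Subgroup.map_eq_bot_iff _).2 hFN, bot_sup_eq,
      Subgroup.map_top_of_surjective φ hφ] at h1
  have hLQ : L.map (φ.comp R.subtype) = ⊤ := by
    apply hQ
    refine ⟨fun h0 => hLfi.index_ne_zero ?_⟩
    have := Subgroup.index_map_dvd L hRQ
    rw [h0] at this
    exact Nat.eq_zero_of_zero_dvd this
  have h1 : φ.ker ⊔ L.map R.subtype = ⊤ := by
    rw [sup_comm, ← Subgroup.comap_map_eq, Subgroup.map_map, hLQ, Subgroup.comap_top]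
  have h2 := hRle _ h1
  apply hL
  rw [eq_top_iff]
  intro x _
  obtain ⟨y, hy, hxy⟩ := h2 x.2
  have : y = x := Subtype.ext hxy
  exact this ▸ hy
end aux

/-- If `G` is locally graded and `N` is a normal locally nilpotent subgroup of `G`,
then `G/N` is locally graded. -/
theorem stmt4 (G : Type*) [Group G] (hlg : LocallyGraded G)
    (N : Subgroup G) [N.Normal] (hln : LocallyNilpotent N) :
    LocallyGraded (G ⧸ N) := by
  intro H hH hHfg
  have hnt : Nontrivial H := (Subgroup.nontrivial_iff_ne_bot H).2 hH
  have hmap : (H.comap (QuotientGroup.mk' N)).map (QuotientGroup.mk' N) = H :=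
    Subgroup.map_comap_eq_self_of_surjective (QuotientGroup.mk'_surjective N) H
  obtain ⟨P, hP, hPfg, hPm⟩ := aux_lift_fg (QuotientGroup.mk' N) (H.comap (QuotientGroup.mk' N)) (by
    rw [hmap]; exact (Group.fg_iff_subgroup_fg H).1 hHfg)
  rw [hmap] at hPm
  have hPg : Group.FG P := (Group.fg_iff_subgroup_fg P).2 hPfg
  let φ : P →* H := ((QuotientGroup.mk' N).comp P.subtype).codRestrict H (fun x => hP x.2)
  refine aux_core P ?_ H φ ?_ ?_
  · intro A hA hAfg
    let e : A ≃* A.map P.subtype := A.equivMapOfInjective P.subtype P.subtype_injective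
    have h1 : A.map P.subtype ≠ ⊥ := by
      intro h
      exact hA ((Subgroup.map_eq_bot_iff_of_injective A P.subtype_injective).1 h)
    have h2 : Group.FG (A.map P.subtype) := Group.fg_of_surjective (f := e.toMonoidHom) e.surjective
    obtain ⟨K, hK, hKf⟩ := hlg _ h1 h2
    refine ⟨K.comap e.toMonoidHom, ?_, ⟨by
      rw [Subgroup.index_comap_of_surjective K e.surjective]
      exact hKf.index_ne_zero⟩⟩
    intro h
    apply hK
    rw [← Subgroup.map_comap_eq_self_of_surjective (f := e.toMonoidHom) e.surjective K, h]
    exact Subgroup.map_top_of_surjective _ e.surjective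
  · rintro ⟨q, hq⟩
    rw [← hPm] at hq
    obtain ⟨x, hx, rfl⟩ := hq
    exact ⟨⟨x, hx⟩, rfl⟩
  · intro E hE hEfg
    have hEN : E.map P.subtype ≤ N := by
      rintro _ ⟨x, hx, rfl⟩
      have h := congrArg Subtype.val (MonoidHom.mem_ker.1 (hE hx))
      exact (QuotientGroup.eq_one_iff _).1 h
    let e : E ≃* E.map P.subtype := E.equivMapOfInjective P.subtype P.subtype_injective
    let e2 : (E.map P.subtype).subgroupOf N ≃* E.map P.subtype := Subgroup.subgroupOfEquivOfLe hEN
    have h1 : Group.FG E := (Group.fg_iff_subgroup_fg E).2 hEfg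
    have h2 : Group.FG ((E.map P.subtype).subgroupOf N) :=
      Group.fg_of_surjective (f := (e.trans e2.symm).toMonoidHom) (e.trans e2.symm).surjective
    have h3 := hln _ h2
    exact Group.nilpotent_of_mulEquiv (e.trans e2.symm).symm
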